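/- For any n ∈ ℕ, m ∈ {0,…,n−1}, s > m, M ∈ ℕ, τ ≥ 1 and k > M^{1/(s−m)}, there exist constants c > 0 and 0 < p < 1 such that for every Borel measure μ on [0,1)ⁿ with dim_H(μ) ≥ s and for μ-almost every x: limsup_{l→∞} (1/l) · #{ j ∈ {1,…,l} : μ(Q_{𝚒, k^n − M k^m}) > c μ(τ Q_𝚒), where 𝚒 ∈ I_k^j is such that x ∈ Q_𝚒 } > p. -/

import Mathlib

open MeasureTheory Metric Filter Set
open scoped ENNReal Classical

/-- The `k`-adic cube of level `l` with address `z`. -/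
def kcube (n k l : ℕ) (z : Fin n → ℤ) : Set (EuclideanSpace ℝ (Fin n)) :=
  {x | ∀ i, (z i : ℝ) * (k : ℝ) ^ (-(l : ℤ)) ≤ x i ∧
    x i < ((z i : ℝ) + 1) * (k : ℝ) ^ (-(l : ℤ))}

/-- The cube `τQ` concentric with the level-`l` cube of address `z`, with side
length scaled by `τ`. -/
def scaledCube (n : ℕ) (τ : ℝ) (k l : ℕ) (z : Fin n → ℤ) :
    Set (EuclideanSpace ℝ (Fin n)) :=
  {x | ∀ i, |x i - ((z i : ℝ) + 1 / 2) * (k : ℝ) ^ (-(l : ℤ))| ≤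
    τ * (k : ℝ) ^ (-(l : ℤ)) / 2}

/-- The address of the level-`l` `k`-adic cube containing `x`. -/
noncomputable def kaddr (n k l : ℕ) (x : EuclideanSpace ℝ (Fin n)) : Fin n → ℤ :=
  fun i => ⌊x i * (k : ℝ) ^ (l : ℕ)⌋

/-- The (lower) Hausdorff dimension of a measure. -/
noncomputable def measDimH {n : ℕ} (μ : Measure (EuclideanSpace ℝ (Fin n))) : ℝ≥0∞ :=
  ⨅ (A : Set (EuclideanSpace ℝ (Fin n))) (_ : MeasurableSet A) (_ : 0 < μ A), dimH A



noncomputable def kchildren (n k : ℕ) (z : Fin n → ℤ) : Finset (Fin n → ℤ) :=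
  Fintype.piFinset (fun j => Finset.Ico ((k : ℤ) * z j) ((k : ℤ) * z j + k))

noncomputable def kbox (n k l : ℕ) : Finset (Fin n → ℤ) :=
  Fintype.piFinset (fun _ => Finset.Ico (0 : ℤ) ((k : ℤ) ^ l))

def unitCube (n : ℕ) : Set (EuclideanSpace ℝ (Fin n)) := {x | ∀ j : Fin n, 0 ≤ x j ∧ x j < 1}

lemma card_kchildren (n k : ℕ) (z : Fin n → ℤ) : (kchildren n k z).card = k ^ n := by
  simp [kchildren]

lemma kaddr_mem_kbox {n k l : ℕ} (hk : 0 < k) {x : EuclideanSpace ℝ (Fin n)}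
    (hx : x ∈ unitCube n) : kaddr n k l x ∈ kbox n k l := by
  have hk' : (0 : ℝ) < (k : ℝ) ^ l := by positivity
  simp only [kbox, Fintype.mem_piFinset, Finset.mem_Ico, kaddr]
  intro i
  obtain ⟨h0, h1⟩ := hx i
  constructor
  · exact Int.floor_nonneg.2 (by positivity)
  · rw [Int.floor_lt]
    push_cast
    nlinarith

lemma kaddr_succ_mem {n k l : ℕ} (hk : 0 < k) (x : EuclideanSpace ℝ (Fin n)) :
    kaddr n k (l + 1) x ∈ kchildren n k (kaddr n k l x) := by
  have hk' : (0 : ℝ) < (k : ℝ) := by positivity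
  simp only [kchildren, Fintype.mem_piFinset, Finset.mem_Ico, kaddr]
  intro i
  have h0 := Int.floor_le (x i * (k : ℝ) ^ l)
  have h1 := Int.lt_floor_add_one (x i * (k : ℝ) ^ l)
  constructor
  · rw [Int.le_floor]
    push_cast
    rw [pow_succ]
    nlinarith
  · rw [Int.floor_lt]
    push_cast
    rw [pow_succ]
    nlinarith

lemma mem_kchildren_iff {n k : ℕ} (hk : 0 < k) (z z' : Fin n → ℤ) :
    z' ∈ kchildren n k z ↔ (fun i => z' i / (k : ℤ)) = z := by
  have hk' : (0 : ℤ) < (k : ℤ) := by positivity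
  simp only [kchildren, Fintype.mem_piFinset, Finset.mem_Ico, funext_iff]
  refine forall_congr' fun i => ?_
  rw [Int.ediv_eq_iff_of_pos hk']
  constructor
  · rintro ⟨a, b⟩; constructor <;> nlinarith
  · rintro ⟨a, b⟩; constructor <;> nlinarith

lemma mem_kcube_iff {n k l : ℕ} (hk : 0 < k) (x : EuclideanSpace ℝ (Fin n)) (z : Fin n → ℤ) :
    x ∈ kcube n k l z ↔ kaddr n k l x = z := by
  have hk' : (0 : ℝ) < (k : ℝ) ^ l := by positivity
  simp only [kcube, kaddr, Set.mem_ofPred_eq, funext_iff]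
  refine forall_congr' fun i => ?_
  rw [Int.floor_eq_iff, zpow_neg, zpow_natCast, ← div_eq_mul_inv, ← div_eq_mul_inv,
    div_le_iff₀ hk', lt_div_iff₀ hk']

lemma measurable_kaddr (n k l : ℕ) : Measurable (kaddr n k l) := by
  unfold kaddr
  refine measurable_pi_lambda _ fun i => ?_
  refine Int.measurable_floor.comp ?_
  fun_prop

lemma measurableSet_kcube {n k l : ℕ} (hk : 0 < k) (z : Fin n → ℤ) :
    MeasurableSet (kcube n k l z) := by
  have : kcube n k l z = kaddr n k l ⁻¹' {z} := by
    ext x; simp [mem_kcube_iff hk]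
  rw [this]
  exact measurable_kaddr n k l (measurableSet_singleton z)

lemma measurableSet_scaledCube (n : ℕ) (τ : ℝ) (k l : ℕ) (z : Fin n → ℤ) :
    MeasurableSet (scaledCube n τ k l z) := by
  unfold scaledCube
  simp only [Set.ofPred_forall]
  refine MeasurableSet.iInter fun i => ?_
  refine measurableSet_le ?_ measurable_const
  fun_prop

lemma dist_le_of_coord {n : ℕ} {x y : EuclideanSpace ℝ (Fin n)} {r : ℝ} (hr : 0 ≤ r)
    (h : ∀ i, |x i - y i| ≤ r) : dist x y ≤ Real.sqrt n * r := by
  rw [EuclideanSpace.dist_eq]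
  refine Real.sqrt_le_iff.2 ⟨by positivity, ?_⟩
  rw [mul_pow, Real.sq_sqrt (by positivity)]
  calc ∑ i, dist (x i) (y i) ^ 2 ≤ ∑ i : Fin n, r ^ 2 := by
        refine Finset.sum_le_sum fun i _ => ?_
        rw [Real.dist_eq]
        exact pow_le_pow_left₀ (abs_nonneg _) (h i) 2
    _ = n * r ^ 2 := by simp

lemma ediam_kcube_le {n k l : ℕ} (hk : 0 < k) (z : Fin n → ℤ) :
    Metric.ediam (kcube n k l z) ≤ ENNReal.ofReal (Real.sqrt n * ((k : ℝ) ^ l)⁻¹) := by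
  refine Metric.ediam_le fun x hx y hy => ?_
  rw [edist_dist]
  refine ENNReal.ofReal_le_ofReal (dist_le_of_coord (by positivity) fun i => ?_)
  have h1 := hx i
  have h2 := hy i
  rw [zpow_neg, zpow_natCast] at h1 h2
  rw [abs_le]
  constructor <;> linarith [h1.1, h1.2, h2.1, h2.2]

/-- number of levels where the child is not in `B` -/
noncomputable def nbCount (n k : ℕ) (B : ℕ → (Fin n → ℤ) → Finset (Fin n → ℤ)) (l : ℕ)
    (x : EuclideanSpace ℝ (Fin n)) : ℕ :=
  ((Finset.range l).filter (fun j => kaddr n k (j + 1) x ∉ B j (kaddr n k j x))).card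

noncomputable def wt (n k : ℕ) (B : ℕ → (Fin n → ℤ) → Finset (Fin n → ℤ)) (u : ℝ) :
    ℕ → (Fin n → ℤ) → ℝ
  | 0, _ => 1
  | l + 1, z' => wt n k B u l (fun i => z' i / (k : ℤ)) *
      (if z' ∈ B l (fun i => z' i / (k : ℤ)) then 1 else u)

lemma wt_nonneg {n k : ℕ} (B : ℕ → (Fin n → ℤ) → Finset (Fin n → ℤ)) {u : ℝ} (hu : 0 < u)
    (l : ℕ) (z : Fin n → ℤ) : 0 ≤ wt n k B u l z := by
  induction l generalizing z with
  | zero => simp [wt]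
  | succ l ih =>
    rw [wt]
    refine mul_nonneg (ih _) ?_
    split_ifs <;> positivity

lemma wt_kaddr {n k : ℕ} (hk : 0 < k) (B : ℕ → (Fin n → ℤ) → Finset (Fin n → ℤ)) (u : ℝ)
    (l : ℕ) (x : EuclideanSpace ℝ (Fin n)) :
    wt n k B u l (kaddr n k l x) = u ^ nbCount n k B l x := by
  induction l with
  | zero => simp [wt, nbCount]
  | succ l ih =>
    have h := (mem_kchildren_iff hk _ _).1 (kaddr_succ_mem (l := l) hk x)
    rw [wt, h, ih, nbCount, nbCount, Finset.range_add_one, Finset.filter_insert]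
    split_ifs with h1
    · simp
    · simp [pow_succ]

lemma sum_wt_le {n k : ℕ} (hk : 0 < k) (B : ℕ → (Fin n → ℤ) → Finset (Fin n → ℤ)) {u : ℝ}
    (hu : 0 < u) (P : ℕ) (hB : ∀ l z, (B l z).card ≤ P) (l : ℕ) :
    ∑ z ∈ kbox n k l, wt n k B u l z ≤ ((P : ℝ) + u * (k : ℝ) ^ n) ^ l := by
  induction l with
  | zero => simp [wt, kbox]
  | succ l ih =>
    have hk' : (0 : ℤ) < (k : ℤ) := by positivity
    have hmap : ∀ z' ∈ kbox n k (l + 1), (fun i => z' i / (k : ℤ)) ∈ kbox n k l := by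
      intro z' hz'
      simp only [kbox, Fintype.mem_piFinset, Finset.mem_Ico] at hz' ⊢
      intro i
      refine ⟨Int.ediv_nonneg (hz' i).1 hk'.le, ?_⟩
      refine Int.ediv_lt_of_lt_mul hk' ?_
      rw [← pow_succ]
      exact (hz' i).2
    rw [← Finset.sum_fiberwise_of_maps_to hmap, pow_succ]
    refine le_trans (Finset.sum_le_sum (g := fun z => wt n k B u l z *
      ((P : ℝ) + u * (k : ℝ) ^ n)) fun z hz => ?_) ?_
    · have h1 : ∀ z' ∈ (kbox n k (l + 1)).filter (fun z' => (fun i => z' i / (k : ℤ)) = z),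
          wt n k B u (l + 1) z' = wt n k B u l z * (if z' ∈ B l z then 1 else u) := by
        intro z' hz'
        have := (Finset.mem_filter.1 hz').2
        rw [wt, this]
      rw [Finset.sum_congr rfl h1, ← Finset.mul_sum]
      refine mul_le_mul_of_nonneg_left ?_ (wt_nonneg B hu l z)
      calc ∑ z' ∈ (kbox n k (l + 1)).filter (fun z' => (fun i => z' i / (k : ℤ)) = z),
            (if z' ∈ B l z then (1 : ℝ) else u)
          ≤ ∑ z' ∈ kchildren n k z, (if z' ∈ B l z then (1 : ℝ) else u) := by
            refine Finset.sum_le_sum_of_subset_of_nonneg ?_ ?_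
            · intro z' hz'
              exact (mem_kchildren_iff hk _ _).2 (Finset.mem_filter.1 hz').2
            · intros; split_ifs <;> positivity
        _ ≤ ∑ z' ∈ kchildren n k z, ((if z' ∈ B l z then (1 : ℝ) else 0) + u) := by
            refine Finset.sum_le_sum fun z' _ => ?_
            split_ifs <;> linarith
        _ ≤ _ := by
            rw [Finset.sum_add_distrib, Finset.sum_ite_mem]
            simp only [Finset.sum_const, card_kchildren, nsmul_eq_mul, mul_one]
            push_cast
            have : ((kchildren n k z ∩ B l z).card : ℝ) ≤ P := by
              exact_mod_cast (Finset.card_le_card Finset.inter_subset_right).trans (hB l z)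
            linarith
    · rw [← Finset.sum_mul]
      refine mul_le_mul_of_nonneg_right ih (by positivity)

lemma hausdorff_zero {n k : ℕ} (hk : 2 ≤ k) (B : ℕ → (Fin n → ℤ) → Finset (Fin n → ℤ)) {u : ℝ}
    (hu : 0 < u) (hu1 : u < 1) (P : ℕ) (hB : ∀ l z, (B l z).card ≤ P) {θ d : ℝ} (hd : 0 < d)
    (hlt : ((P : ℝ) + u * (k : ℝ) ^ n) * u ^ (-θ) < (k : ℝ) ^ d)
    (F : Set (EuclideanSpace ℝ (Fin n))) (hF : F ⊆ unitCube n)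
    (hF2 : ∀ x ∈ F, ∃ᶠ l in atTop, (nbCount n k B l x : ℝ) ≤ θ * (l : ℝ)) :
    Measure.hausdorffMeasure d F = 0 := by
  have hk0 : 0 < k := by omega
  have hkR : (1 : ℝ) < k := by exact_mod_cast hk
  set lam : ℝ := (P : ℝ) + u * (k : ℝ) ^ n with hlam
  have hlam0 : 0 < lam := by positivity
  let G : ℕ → Finset (Fin n → ℤ) := fun l =>
    (kbox n k l).filter (fun z => u ^ (θ * (l : ℝ)) ≤ wt n k B u l z)
  set ρ : ℝ := lam * u ^ (-θ) / (k : ℝ) ^ d with hρ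
  have hρ0 : 0 ≤ ρ := by positivity
  have hρ1 : ρ < 1 := by rw [hρ, div_lt_one (by positivity)]; exact hlt
  have hcard : ∀ l, ((G l).card : ℝ) ≤ (lam * u ^ (-θ)) ^ l := by
    intro l
    have h1 : ((G l).card : ℝ) * u ^ (θ * (l : ℝ)) ≤ lam ^ l := by
      refine le_trans ?_ (sum_wt_le hk0 B hu P hB l)
      rw [← nsmul_eq_mul]
      refine (Finset.card_nsmul_le_sum _ _ _ fun z hz => (Finset.mem_filter.1 hz).2).trans ?_
      exact Finset.sum_le_sum_of_subset_of_nonneg (Finset.filter_subset _ _)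
        fun z _ _ => wt_nonneg B hu l z
    rw [mul_pow, ← Real.rpow_mul_natCast hu.le, neg_mul, Real.rpow_neg hu.le,
      ← div_eq_mul_inv, le_div_iff₀ (by positivity)]
    exact h1
  let Cd : ℝ := Real.sqrt n ^ d
  have hsum : ∀ l, ∑ z ∈ G l, Metric.ediam (kcube n k l z) ^ d ≤ ENNReal.ofReal (Cd * ρ ^ l) := by
    intro l
    calc ∑ z ∈ G l, Metric.ediam (kcube n k l z) ^ d
        ≤ ∑ z ∈ G l, ENNReal.ofReal ((Real.sqrt n * ((k : ℝ) ^ l)⁻¹) ^ d) := by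
          refine Finset.sum_le_sum fun z _ => ?_
          rw [← ENNReal.ofReal_rpow_of_nonneg (by positivity) hd.le]
          exact ENNReal.rpow_le_rpow (ediam_kcube_le hk0 z) hd.le
      _ = ENNReal.ofReal ((G l).card * ((Real.sqrt n * ((k : ℝ) ^ l)⁻¹) ^ d)) := by
          rw [Finset.sum_const, nsmul_eq_mul, ENNReal.ofReal_mul (by positivity),
            ENNReal.ofReal_natCast]
      _ ≤ _ := by
          refine ENNReal.ofReal_le_ofReal ?_
          rw [Real.mul_rpow (by positivity) (by positivity), hρ, div_pow]
          have : (((k : ℝ) ^ l)⁻¹) ^ d = (((k : ℝ) ^ d) ^ l)⁻¹ := by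
            rw [Real.inv_rpow (by positivity), ← Real.rpow_natCast_mul (by positivity),
              ← Real.rpow_mul_natCast (by positivity), mul_comm]
          rw [this]
          have h3 := mul_le_mul_of_nonneg_right (hcard l)
            (show 0 ≤ Cd * (((k : ℝ) ^ d) ^ l)⁻¹ by positivity)
          calc _ = ((G l).card : ℝ) * (Cd * (((k : ℝ) ^ d) ^ l)⁻¹) := by rfl
            _ ≤ _ := h3
            _ = _ := by ring
  have hr0 : Tendsto (fun L : ℕ => ENNReal.ofReal (Real.sqrt n * ((k : ℝ) ^ L)⁻¹)) atTop
      (nhds 0) := by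
    rw [← ENNReal.ofReal_zero]
    refine ENNReal.tendsto_ofReal ?_
    have : Tendsto (fun L : ℕ => ((k : ℝ) ^ L)⁻¹) atTop (nhds 0) :=
      (tendsto_pow_atTop_atTop_of_one_lt hkR).inv_tendsto_atTop
    simpa using this.const_mul (Real.sqrt n)
  have key := Measure.hausdorffMeasure_le_liminf_tsum (β := ℕ)
    (ι := fun L => (Σ l : ℕ, {z // z ∈ G (L + l)})) d F (l := atTop)
    (fun L : ℕ => ENNReal.ofReal (Real.sqrt n * ((k : ℝ) ^ L)⁻¹)) hr0
    (fun L q => kcube n k (L + q.1) q.2.1)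
    (Eventually.of_forall fun L q => by
      refine (ediam_kcube_le hk0 _).trans (ENNReal.ofReal_le_ofReal ?_)
      have : (k : ℝ) ^ L ≤ (k : ℝ) ^ (L + q.1) := pow_le_pow_right₀ hkR.le (by omega)
      gcongr)
    (Eventually.of_forall fun L x hx => by
      obtain ⟨l, hl, hxl⟩ := (frequently_atTop.1 (hF2 x hx)) L
      obtain ⟨q, rfl⟩ := Nat.exists_eq_add_of_le hl
      refine Set.mem_iUnion.2 ⟨⟨q, ⟨kaddr n k (L + q) x, ?_⟩⟩, ?_⟩
      · refine Finset.mem_filter.2 ⟨kaddr_mem_kbox hk0 (hF hx), ?_⟩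
        rw [wt_kaddr hk0, ← Real.rpow_natCast u (nbCount _ _ _ _ _)]
        exact Real.rpow_le_rpow_of_exponent_ge hu hu1.le hxl
      · exact (mem_kcube_iff hk0 _ _).2 rfl)
  have htail : Tendsto (fun L : ℕ => ENNReal.ofReal (Cd * ρ ^ L * (1 - ρ)⁻¹)) atTop (nhds 0) := by
    rw [← ENNReal.ofReal_zero]
    refine ENNReal.tendsto_ofReal ?_
    simpa using ((tendsto_pow_atTop_nhds_zero_of_lt_one hρ0 hρ1).const_mul Cd).mul_const (1 - ρ)⁻¹
  refine le_antisymm (key.trans ?_) zero_le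
  rw [← htail.liminf_eq]
  refine liminf_le_liminf (Eventually.of_forall fun L => ?_)
  rw [ENNReal.tsum_sigma']
  calc _ ≤ ∑' l : ℕ, ENNReal.ofReal (Cd * ρ ^ (L + l)) := by
        refine ENNReal.tsum_le_tsum fun l => ?_
        rw [tsum_fintype]
        refine le_trans (le_of_eq ?_) (hsum (L + l))
        exact Finset.sum_coe_sort (G (L + l)) (fun z => Metric.ediam (kcube n k (L + l) z) ^ d)
    _ = _ := by
        rw [← ENNReal.ofReal_tsum_of_nonneg]
        · congr 1
          simp_rw [pow_add, ← mul_assoc]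
          rw [tsum_mul_left, tsum_geometric_of_lt_one hρ0 hρ1]
        · intro l; positivity
        · simp_rw [pow_add, ← mul_assoc]
          exact (summable_geometric_of_lt_one hρ0 hρ1).mul_left _
    _ ≤ _ := le_rfl


lemma overlap_card {n : ℕ} (τ : ℝ) (_hτ : 1 ≤ τ) {k : ℕ} (hk : 0 < k) (j : ℕ)
    (S : Finset (Fin n → ℤ)) (y : EuclideanSpace ℝ (Fin n)) :
    (S.filter (fun z => y ∈ scaledCube n τ k j z)).card ≤ (⌈τ⌉₊ + 1) ^ n := by
  have hk' : (0 : ℝ) < (k : ℝ) ^ j := by positivity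
  let a : Fin n → ℝ := fun i => y i * (k : ℝ) ^ j - 1 / 2 - τ / 2
  have hsub : S.filter (fun z => y ∈ scaledCube n τ k j z) ⊆
      Fintype.piFinset (fun i => Finset.Icc ⌈a i⌉ ⌊a i + τ⌋) := by
    intro z hz
    have hz' := (Finset.mem_filter.1 hz).2
    simp only [Fintype.mem_piFinset, Finset.mem_Icc, Int.ceil_le, Int.le_floor]
    intro i
    have h := hz' i
    rw [zpow_neg, zpow_natCast, abs_le] at h
    obtain ⟨h1, h2⟩ := h
    have e1 := mul_le_mul_of_nonneg_right h1 hk'.le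
    have e2 := mul_le_mul_of_nonneg_right h2 hk'.le
    field_simp at e1 e2
    simp only [a]
    constructor <;> linarith
  refine (Finset.card_le_card hsub).trans ?_
  rw [Fintype.card_piFinset]
  calc ∏ i, (Finset.Icc ⌈a i⌉ ⌊a i + τ⌋).card ≤ ∏ i : Fin n, (⌈τ⌉₊ + 1) := by
        refine Finset.prod_le_prod' fun i _ => ?_
        rw [Int.card_Icc]
        have h1 := Int.le_ceil (a i)
        have h2 := Int.floor_le (a i + τ)
        have h3 := Nat.le_ceil τ
        have : (⌊a i + τ⌋ : ℝ) ≤ (⌈a i⌉ : ℝ) + (⌈τ⌉₊ : ℝ) := by linarith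
        have h4 : ⌊a i + τ⌋ ≤ ⌈a i⌉ + (⌈τ⌉₊ : ℤ) := by exact_mod_cast this
        omega
    _ = _ := by simp

lemma sum_scaled_le {n : ℕ} (τ : ℝ) (hτ : 1 ≤ τ) {k : ℕ} (hk : 0 < k) (j : ℕ)
    (S : Finset (Fin n → ℤ)) (μ : Measure (EuclideanSpace ℝ (Fin n)))
    (U : Set (EuclideanSpace ℝ (Fin n))) (hU : MeasurableSet U)
    (hS : ∀ z ∈ S, scaledCube n τ k j z ⊆ U) :
    ∑ z ∈ S, μ (scaledCube n τ k j z) ≤ (((⌈τ⌉₊ + 1) ^ n : ℕ) : ℝ≥0∞) * μ U := by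
  calc ∑ z ∈ S, μ (scaledCube n τ k j z)
      = ∑ z ∈ S, ∫⁻ y, (scaledCube n τ k j z).indicator (fun _ => (1 : ℝ≥0∞)) y ∂μ := by
        refine Finset.sum_congr rfl fun z _ => ?_
        rw [lintegral_indicator_const (measurableSet_scaledCube n τ k j z), one_mul]
    _ = ∫⁻ y, ∑ z ∈ S, (scaledCube n τ k j z).indicator (fun _ => (1 : ℝ≥0∞)) y ∂μ := by
        rw [lintegral_finsetSum]
        intro z _
        exact measurable_const.indicator (measurableSet_scaledCube n τ k j z)
    _ ≤ ∫⁻ y, U.indicator (fun _ => (((⌈τ⌉₊ + 1) ^ n : ℕ) : ℝ≥0∞)) y ∂μ := by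
        refine lintegral_mono fun y => ?_
        by_cases hy : y ∈ U
        · rw [Set.indicator_of_mem hy]
          simp only [Set.indicator_apply, Finset.sum_boole]
          exact_mod_cast overlap_card τ hτ hk j S y
        · rw [Set.indicator_of_notMem hy]
          refine le_of_eq (Finset.sum_eq_zero fun z hz => ?_)
          exact Set.indicator_of_notMem (fun h => hy (hS z hz h)) _
    _ = _ := by rw [lintegral_indicator_const hU]

/-- Mass of the points of `K` which fall at level `j` into a small child of a bad cube. -/
lemma small_mass {n : ℕ} (τ : ℝ) (hτ : 1 ≤ τ) {k : ℕ} (hk : 0 < k) (j : ℕ)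
    (μ : Measure (EuclideanSpace ℝ (Fin n))) (c : ℝ≥0∞)
    (Sm : (Fin n → ℤ) → (Fin n → ℤ) → Prop)
    (hSm : ∀ z, ∀ z' ∈ kchildren n k z, Sm z z' →
      μ (kcube n k (j + 1) z') ≤ c * μ (scaledCube n τ k j z))
    (K : Set (EuclideanSpace ℝ (Fin n))) (hK : K ⊆ unitCube n) {ε : ℝ}
    (hε : Real.sqrt n * (τ * ((k : ℝ) ^ j)⁻¹) ≤ ε) :
    μ (K ∩ {x | Sm (kaddr n k j x) (kaddr n k (j + 1) x)}) ≤
      ((k ^ n : ℕ) : ℝ≥0∞) * c * (((⌈τ⌉₊ + 1) ^ n : ℕ) : ℝ≥0∞) * μ (cthickening ε K) := by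
  let S : Finset (Fin n → ℤ) := (kbox n k j).filter (fun z => ∃ x ∈ K, kaddr n k j x = z)
  have hS : ∀ z ∈ S, scaledCube n τ k j z ⊆ cthickening ε K := by
    intro z hz y hy
    obtain ⟨x, hx, hxz⟩ := (Finset.mem_filter.1 hz).2
    have hx' := (mem_kcube_iff hk x z).2 hxz
    refine mem_cthickening_of_dist_le y x ε K hx (le_trans ?_ hε)
    have hr : 0 ≤ ((k : ℝ) ^ j)⁻¹ := by positivity
    refine dist_le_of_coord (by positivity) fun i => ?_
    have h1 := hx' i
    have h2 := hy i
    rw [zpow_neg, zpow_natCast] at h1 h2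
    rw [abs_le] at h2 ⊢
    constructor <;> nlinarith [h1.1, h1.2, h2.1, h2.2]
  have hcov : K ∩ {x | Sm (kaddr n k j x) (kaddr n k (j + 1) x)} ⊆
      ⋃ z ∈ S, ⋃ z' ∈ (kchildren n k z).filter (fun z' => Sm z z'), kcube n k (j + 1) z' := by
    rintro x ⟨hxK, hx⟩
    simp only [Set.mem_iUnion]
    refine ⟨kaddr n k j x, ?_, kaddr n k (j + 1) x, ?_, (mem_kcube_iff hk _ _).2 rfl⟩
    · exact Finset.mem_filter.2 ⟨kaddr_mem_kbox hk (hK hxK), x, hxK, rfl⟩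
    · exact Finset.mem_filter.2 ⟨kaddr_succ_mem hk x, hx⟩
  calc _ ≤ _ := measure_mono hcov
    _ ≤ ∑ z ∈ S, μ (⋃ z' ∈ (kchildren n k z).filter (fun z' => Sm z z'), kcube n k (j + 1) z') :=
        measure_biUnion_finset_le _ _
    _ ≤ ∑ z ∈ S, ((k ^ n : ℕ) : ℝ≥0∞) * c * μ (scaledCube n τ k j z) := by
        refine Finset.sum_le_sum fun z _ => ?_
        refine (measure_biUnion_finset_le _ _).trans ?_
        refine (Finset.sum_le_card_nsmul _ _ (c * μ (scaledCube n τ k j z)) ?_).trans ?_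
        · intro z' hz'
          obtain ⟨h1, h2⟩ := Finset.mem_filter.1 hz'
          exact hSm z z' h1 h2
        · rw [nsmul_eq_mul, mul_assoc]
          gcongr
          rw [← card_kchildren n k z]
          exact Finset.card_le_card (Finset.filter_subset _ _)
    _ = ((k ^ n : ℕ) : ℝ≥0∞) * c * ∑ z ∈ S, μ (scaledCube n τ k j z) := by
        rw [Finset.mul_sum]
    _ ≤ ((k ^ n : ℕ) : ℝ≥0∞) * c * ((((⌈τ⌉₊ + 1) ^ n : ℕ) : ℝ≥0∞) * μ (cthickening ε K)) := by
        gcongr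
        exact sum_scaled_le τ hτ hk j S μ _ isClosed_cthickening.measurableSet hS
    _ = _ := by ring

/-- Markov + reverse Fatou. -/
lemma markov_limsup {X : Type*} [MeasurableSpace X] (μ : Measure X) [IsFiniteMeasure μ]
    (K : Set X) (hK : MeasurableSet K) (hK0 : 0 < μ K) (j0 : ℕ) (Sm : ℕ → Set X)
    (hSm : ∀ j, MeasurableSet (Sm j)) {δ : ℝ} (hδ : 0 < δ)
    (h : ∀ j, j0 ≤ j → μ (K ∩ Sm j) ≤ ENNReal.ofReal (δ / 2) * μ K) :
    ∃ F ⊆ K, MeasurableSet F ∧ 0 < μ F ∧ ∀ x ∈ F, ∃ᶠ l : ℕ in atTop,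
      (((Finset.Ico j0 l).filter (fun j => x ∈ Sm j)).card : ℝ) ≤ δ * l := by
  let cnt : ℕ → X → ℝ≥0∞ := fun l x =>
    ∑ j ∈ Finset.Ico j0 l, (Sm j).indicator (fun _ => (1 : ℝ≥0∞)) x
  have hcnt : ∀ l x, cnt l x = (((Finset.Ico j0 l).filter (fun j => x ∈ Sm j)).card : ℝ≥0∞) := by
    intro l x
    simp only [cnt, Set.indicator_apply, Finset.sum_boole]
  have hmeas : ∀ l, Measurable (cnt l) := fun l =>
    Finset.measurable_sum _ fun j _ => measurable_const.indicator (hSm j)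
  let A : ℕ → Set X := fun l => K ∩ {x | cnt l x < ENNReal.ofReal (δ * l)}
  have hA : ∀ l, MeasurableSet (A l) := fun l =>
    hK.inter (measurableSet_lt (hmeas l) measurable_const)
  have hAm : ∀ l, 1 ≤ l → μ K / 2 ≤ μ (A l) := by
    intro l hl
    have hl' : (0 : ℝ) < l := by exact_mod_cast hl
    have hint : ∫⁻ x in K, cnt l x ∂μ ≤ ENNReal.ofReal (δ * l) * (μ K / 2) := by
      rw [lintegral_finsetSum _ fun j _ => measurable_const.indicator (hSm j)]
      calc ∑ j ∈ Finset.Ico j0 l, ∫⁻ x in K, (Sm j).indicator (fun _ => (1 : ℝ≥0∞)) x ∂μ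
          ≤ ∑ j ∈ Finset.Ico j0 l, ENNReal.ofReal (δ / 2) * μ K := by
            refine Finset.sum_le_sum fun j hj => ?_
            rw [lintegral_indicator_const (hSm j), one_mul, Measure.restrict_apply (hSm j),
              Set.inter_comm]
            exact h j (Finset.mem_Ico.1 hj).1
        _ = ((l - j0 : ℕ) : ℝ≥0∞) * (ENNReal.ofReal (δ / 2) * μ K) := by simp
        _ ≤ (l : ℝ≥0∞) * (ENNReal.ofReal (δ / 2) * μ K) := by
            gcongr
            omega
        _ = _ := by
            rw [ENNReal.ofReal_mul hδ.le, ENNReal.ofReal_natCast, ENNReal.ofReal_div_of_pos two_pos,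
              ENNReal.ofReal_ofNat, ENNReal.div_eq_inv_mul, ENNReal.div_eq_inv_mul]
            ring
    have hM := (mul_meas_ge_le_lintegral (μ := μ.restrict K) (hmeas l)
      (ENNReal.ofReal (δ * l))).trans hint
    have hpos : ENNReal.ofReal (δ * l) ≠ 0 := by
      rw [Ne, ENNReal.ofReal_eq_zero, not_le]; positivity
    rw [ENNReal.mul_le_mul_iff_right hpos ENNReal.ofReal_ne_top,
      Measure.restrict_apply (measurableSet_le measurable_const (hmeas l))] at hM
    have hsplit : μ K ≤ μ (A l) + μ ({x | ENNReal.ofReal (δ * l) ≤ cnt l x} ∩ K) := by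
      refine (measure_mono ?_).trans (measure_union_le _ _)
      intro x hx
      by_cases hc : cnt l x < ENNReal.ofReal (δ * l)
      · exact Or.inl ⟨hx, hc⟩
      · exact Or.inr ⟨not_lt.1 hc, hx⟩
    have h3 : μ K / 2 + μ K / 2 ≤ μ (A l) + μ K / 2 := by
      rw [ENNReal.add_halves]
      exact hsplit.trans (by gcongr)
    exact (ENNReal.add_le_add_iff_right
      (ENNReal.div_ne_top (measure_ne_top μ K) (by norm_num))).1 h3
  let V : ℕ → Set X := fun L => ⋃ l ≥ L, A l
  have hV : ∀ L, MeasurableSet (V L) := fun L =>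
    MeasurableSet.iUnion fun l => MeasurableSet.iUnion fun _ => hA l
  have hVanti : Antitone V := by
    intro a b hab x hx
    simp only [V, Set.mem_iUnion] at hx ⊢
    obtain ⟨l, hl, hx⟩ := hx
    exact ⟨l, le_trans hab hl, hx⟩
  have hVm : ∀ L, μ K / 2 ≤ μ (V L) := fun L =>
    (hAm (L + 1) (by omega)).trans (measure_mono
      (Set.subset_biUnion_of_mem (u := A) (show L + 1 ∈ {l | l ≥ L} from Nat.le_succ L)))
  refine ⟨⋂ L, V L, ?_, MeasurableSet.iInter hV, ?_, ?_⟩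
  · intro x hx
    have := Set.mem_iInter.1 hx 0
    simp only [V, Set.mem_iUnion] at this
    obtain ⟨l, _, hx⟩ := this
    exact hx.1
  · have ht := tendsto_measure_iInter_atTop (μ := μ) (fun L => (hV L).nullMeasurableSet) hVanti
      ⟨0, measure_ne_top _ _⟩
    refine lt_of_lt_of_le (ENNReal.half_pos hK0.ne') (ge_of_tendsto' ht hVm)
  · intro x hx
    rw [frequently_atTop]
    intro L
    have := Set.mem_iInter.1 hx L
    simp only [V, Set.mem_iUnion] at this
    obtain ⟨l, hl, hx⟩ := this
    refine ⟨l, hl, ?_⟩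
    have h2 : cnt l x < ENNReal.ofReal (δ * l) := hx.2
    rw [hcnt, ← ENNReal.ofReal_natCast] at h2
    exact (ENNReal.ofReal_lt_ofReal_iff_of_nonneg (by positivity)).1 h2 |>.le

lemma exists_params (P : ℕ) (hP : 1 ≤ P) (n k : ℕ) (hk : 2 ≤ k) (s : ℝ)
    (h : (P : ℝ) < (k : ℝ) ^ s) :
    ∃ u d θ : ℝ, 0 < u ∧ u < 1 ∧ 0 < d ∧ d < s ∧ 0 < θ ∧ θ < 1 ∧
      ((P : ℝ) + u * (k : ℝ) ^ n) * u ^ (-θ) < (k : ℝ) ^ d := by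
  have hkR : (1 : ℝ) < k := by exact_mod_cast hk
  have hPR : (1 : ℝ) ≤ P := by exact_mod_cast hP
  obtain ⟨D, hD1, hD2⟩ := exists_between h
  have hD0 : 0 < D := by linarith
  have hkn : (0 : ℝ) < (k : ℝ) ^ n := by positivity
  let u : ℝ := min (1 / 2) ((D - P) / (2 * (k : ℝ) ^ n))
  have hu : 0 < u := lt_min (by norm_num) (div_pos (by linarith) (by positivity))
  have hu1 : u < 1 := (min_le_left _ _).trans_lt (by norm_num)
  have hu2 : u * (k : ℝ) ^ n < D - P := by
    have : u ≤ (D - P) / (2 * (k : ℝ) ^ n) := min_le_right _ _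
    rw [le_div_iff₀ (by positivity)] at this
    linarith
  have hcont : Tendsto (fun θ : ℝ => ((P : ℝ) + u * (k : ℝ) ^ n) * u ^ (-θ)) (nhds 0)
      (nhds (((P : ℝ) + u * (k : ℝ) ^ n) * u ^ (-(0 : ℝ)))) := by
    have : Continuous (fun θ : ℝ => ((P : ℝ) + u * (k : ℝ) ^ n) * u ^ (-θ)) :=
      continuous_const.mul ((Real.continuous_const_rpow hu.ne').comp continuous_neg)
    exact this.tendsto 0
  have hev := hcont.eventually_lt_const (u := D) (by rw [neg_zero, Real.rpow_zero]; linarith)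
  obtain ⟨r, hr, hball⟩ := Metric.eventually_nhds_iff.1 hev
  refine ⟨u, Real.logb k D, min (1 / 2) (r / 2), hu, hu1, ?_, ?_, ?_, ?_, ?_⟩
  · exact Real.logb_pos hkR (by linarith)
  · exact (Real.logb_lt_iff_lt_rpow hkR hD0).2 hD2
  · positivity
  · exact (min_le_left _ _).trans_lt (by norm_num)
  · rw [Real.rpow_logb (by linarith) hkR.ne' hD0]
    apply hball
    rw [Real.dist_eq, sub_zero, abs_of_pos (by positivity)]
    exact (min_le_right _ _).trans_lt (by linarith)


theorem stmt14 (n m : ℕ) (hm : m < n) (s : ℝ) (hs : (m : ℝ) < s) (M : ℕ) (hM : 1 ≤ M)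
    (τ : ℝ) (hτ : 1 ≤ τ) (k : ℕ) (hk : (M : ℝ) ^ (1 / (s - m)) < (k : ℝ)) :
    ∃ c : ℝ, 0 < c ∧ ∃ p : ℝ, 0 < p ∧ p < 1 ∧
      ∀ (μ : Measure (EuclideanSpace ℝ (Fin n))) [IsFiniteMeasure μ],
        μ {x | ∀ j : Fin n, 0 ≤ x j ∧ x j < 1}ᶜ = 0 →
        ENNReal.ofReal s ≤ measDimH μ →
        ∀ (e : ℕ → (Fin n → ℤ) → ℕ → (Fin n → ℤ)),
          -- `e l z` lists the `kⁿ` children addresses of the cube `(l, z)` without repetition: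
          (∀ l z, ∀ a < k ^ n, ∀ b < k ^ n, e l z a = e l z b → a = b) →
          (∀ l z, ∀ a < k ^ n, ∀ j : Fin n,
            (k : ℤ) * z j ≤ e l z a j ∧ e l z a j < (k : ℤ) * z j + k) →
          -- the enumeration is in increasing order of measure:
          (∀ l z, ∀ a b, a ≤ b → b < k ^ n →
            μ (kcube n k (l + 1) (e l z a)) ≤ μ (kcube n k (l + 1) (e l z b))) →
          ∀ᵐ x ∂μ, p <
            limsup (fun l : ℕ =>
              (((Finset.Icc 1 l).filter (fun j : ℕ =>
                ENNReal.ofReal c * μ (scaledCube n τ k j (kaddr n k j x)) <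
                  μ (kcube n k (j + 1)
                    (e j (kaddr n k j x) (k ^ n - M * k ^ m - 1))))).card : ℝ) / (l : ℝ))
              atTop := by
  have hMR : (1 : ℝ) ≤ M := by exact_mod_cast hM
  have hsm : 0 < s - m := by linarith
  have hk1 : (1 : ℝ) < k := lt_of_le_of_lt (Real.one_le_rpow hMR (by positivity)) hk
  have hk2 : 2 ≤ k := by
    have : 1 < k := by exact_mod_cast hk1
    omega
  have hk0 : 0 < k := by omega
  have hP1 : 1 ≤ M * k ^ m := Nat.one_le_iff_ne_zero.2 (by positivity)
  have hPs : ((M * k ^ m : ℕ) : ℝ) < (k : ℝ) ^ s := by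
    have h1 : (M : ℝ) < (k : ℝ) ^ (s - m) := by
      have := Real.rpow_lt_rpow (by positivity) hk hsm
      rwa [← Real.rpow_mul (by positivity), one_div, inv_mul_cancel₀ hsm.ne',
        Real.rpow_one] at this
    rw [Real.rpow_sub (by positivity), Real.rpow_natCast, lt_div_iff₀ (by positivity)] at h1
    exact_mod_cast h1
  obtain ⟨u, d, θ, hu, hu1, hd, hds, hθ, hθ1, hlt⟩ := exists_params (M * k ^ m) hP1 n k hk2 s hPs
  set C : ℕ := (⌈τ⌉₊ + 1) ^ n with hC
  have hC0 : (0 : ℝ) < C := by rw [hC]; positivity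
  have hkn0 : (0 : ℝ) < ((k ^ n : ℕ) : ℝ) := by positivity
  refine ⟨θ / 4 / (4 * ((k ^ n : ℕ) : ℝ) * C), by positivity, θ / 8, by positivity, by linarith, ?_⟩
  set c : ℝ := θ / 4 / (4 * ((k ^ n : ℕ) : ℝ) * C) with hc
  intro μ _ hμ hdim e hinj hchild hmono
  -- big children
  let B : ℕ → (Fin n → ℤ) → Finset (Fin n → ℤ) := fun l z =>
    (Finset.Ico (k ^ n - M * k ^ m) (k ^ n)).image (e l z)
  have hB : ∀ l z, (B l z).card ≤ M * k ^ m := by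
    intro l z
    refine Finset.card_image_le.trans ?_
    rw [Nat.card_Ico]
    omega
  have hsurj : ∀ l z, ∀ z' ∈ kchildren n k z, ∃ a < k ^ n, e l z a = z' := by
    intro l z z' hz'
    have himg : (Finset.range (k ^ n)).image (e l z) = kchildren n k z := by
      refine Finset.eq_of_subset_of_card_le ?_ ?_
      · intro w hw
        obtain ⟨a, ha, rfl⟩ := Finset.mem_image.1 hw
        simp only [kchildren, Fintype.mem_piFinset, Finset.mem_Ico]
        exact hchild l z a (Finset.mem_range.1 ha)
      · rw [card_kchildren, Finset.card_image_of_injOn, Finset.card_range]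
        intro a ha b hb hab
        exact hinj l z a (by simpa using ha) b (by simpa using hb) hab
    rw [← himg] at hz'
    obtain ⟨a, ha, rfl⟩ := Finset.mem_image.1 hz'
    exact ⟨a, Finset.mem_range.1 ha, rfl⟩
  let good : ℕ → (Fin n → ℤ) → Prop := fun j z =>
    ENNReal.ofReal c * μ (scaledCube n τ k j z) <
      μ (kcube n k (j + 1) (e j z (k ^ n - M * k ^ m - 1)))
  let Sm : ℕ → (Fin n → ℤ) → (Fin n → ℤ) → Prop := fun j z z' => z' ∉ B j z ∧ ¬ good j z
  have hSm : ∀ j z, ∀ z' ∈ kchildren n k z, Sm j z z' →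
      μ (kcube n k (j + 1) z') ≤ ENNReal.ofReal c * μ (scaledCube n τ k j z) := by
    rintro j z z' hz' ⟨h1, h2⟩
    obtain ⟨a, ha, rfl⟩ := hsurj j z z' hz'
    have ha2 : a < k ^ n - M * k ^ m := by
      by_contra hcon
      exact h1 (Finset.mem_image.2 ⟨a, Finset.mem_Ico.2 ⟨not_lt.1 hcon, ha⟩, rfl⟩)
    exact (hmono j z a (k ^ n - M * k ^ m - 1) (by omega) (by omega)).trans (not_lt.1 h2)
  -- count of good levels
  let gc : ℕ → EuclideanSpace ℝ (Fin n) → ℕ := fun l x =>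
    ((Finset.Icc 1 l).filter (fun j => good j (kaddr n k j x))).card
  have hgoodm : ∀ j, MeasurableSet {x | good j (kaddr n k j x)} := fun j =>
    measurable_kaddr n k j (MeasurableSet.of_discrete (s := {z | good j z}))
  have hgcm : ∀ l, Measurable (gc l) := by
    intro l
    have : gc l = fun x => ∑ j ∈ Finset.Icc 1 l,
        {x | good j (kaddr n k j x)}.indicator (fun _ => 1) x := by
      funext x
      simp only [gc, Set.indicator_apply, Set.mem_ofPred_eq]
      rw [Finset.card_filter]
    rw [this]
    exact Finset.measurable_sum _ fun j _ => measurable_const.indicator (hgoodm j)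
  have hcubem : MeasurableSet (unitCube n) := by
    have : unitCube n = ⋂ j : Fin n, {x | 0 ≤ x j ∧ x j < 1} := by
      ext x; simp [unitCube]
    rw [this]
    refine MeasurableSet.iInter fun j => ?_
    have hmj : Measurable (fun x : EuclideanSpace ℝ (Fin n) => x j) := by fun_prop
    exact (measurableSet_le measurable_const hmj).inter (measurableSet_lt hmj measurable_const)
  let A : ℕ → Set (EuclideanSpace ℝ (Fin n)) := fun L =>
    unitCube n ∩ ⋂ l, ⋂ (_ : L ≤ l), {x | (gc l x : ℝ) ≤ θ / 4 * l}
  have hAm : ∀ L, MeasurableSet (A L) := fun L =>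
    hcubem.inter (MeasurableSet.iInter fun l => MeasurableSet.iInter fun _ =>
      measurableSet_le (measurable_from_top.comp (hgcm l)) measurable_const)
  by_contra hcon
  have hcon' : μ {x | ¬ (θ / 8 < limsup (fun l : ℕ => (gc l x : ℝ) / (l : ℝ)) atTop)} ≠ 0 := hcon
  have hcov : {x | ¬ (θ / 8 < limsup (fun l : ℕ => (gc l x : ℝ) / (l : ℝ)) atTop)} ⊆
      (unitCube n)ᶜ ∪ ⋃ L, A L := by
    intro x hx
    by_cases hxu : x ∈ unitCube n
    · right
      have hx1 : limsup (fun l : ℕ => (gc l x : ℝ) / (l : ℝ)) atTop < θ / 4 :=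
        lt_of_le_of_lt (not_lt.1 hx) (by linarith)
      have hbdd : IsBoundedUnder (· ≤ ·) atTop (fun l : ℕ => (gc l x : ℝ) / (l : ℝ)) := by
        refine isBoundedUnder_of ⟨1, fun l => ?_⟩
        refine div_le_one_of_le₀ ?_ (by positivity)
        have : gc l x ≤ l := (Finset.card_filter_le _ _).trans (by simp)
        exact_mod_cast this
      have hev := eventually_lt_of_limsup_lt hx1 hbdd
      obtain ⟨L, hL⟩ := eventually_atTop.1 hev
      refine Set.mem_iUnion.2 ⟨L + 1, hxu, ?_⟩
      simp only [Set.mem_iInter]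
      intro l hl
      have h := hL l (by omega)
      have hl0 : (0 : ℝ) < l := by
        have : 0 < l := by omega
        exact_mod_cast this
      rw [div_lt_iff₀ hl0] at h
      exact h.le
    · exact Or.inl hxu
  have hex : ∃ L, μ (A L) ≠ 0 := by
    by_contra hall
    push Not at hall
    refine hcon' (measure_mono_null hcov (measure_union_null hμ (measure_iUnion_null hall)))
  obtain ⟨L, hL⟩ := hex
  obtain ⟨K, hKA, hKc, hK0⟩ := (hAm L).exists_lt_isCompact (pos_iff_ne_zero.2 hL)
  have hKu : K ⊆ unitCube n := fun x hx => (hKA hx).1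
  -- a thin neighbourhood of K
  have hthick : ∀ᶠ r in nhds (0 : ℝ), μ (cthickening r K) < 2 * μ K := by
    refine (tendsto_measure_cthickening_of_isCompact hKc).eventually_lt_const ?_
    rw [two_mul]
    exact ENNReal.lt_add_right (measure_ne_top _ _) hK0.ne'
  have hr0 : Tendsto (fun j : ℕ => Real.sqrt n * (τ * ((k : ℝ) ^ j)⁻¹)) atTop (nhds 0) := by
    have : Tendsto (fun L : ℕ => ((k : ℝ) ^ L)⁻¹) atTop (nhds 0) :=
      (tendsto_pow_atTop_atTop_of_one_lt hk1).inv_tendsto_atTop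
    simpa using (this.const_mul τ).const_mul (Real.sqrt n)
  obtain ⟨j0, hj0⟩ := eventually_atTop.1 (hr0.eventually hthick)
  have hsmall : ∀ j, j0 + 1 ≤ j →
      μ (K ∩ {x | Sm j (kaddr n k j x) (kaddr n k (j + 1) x)}) ≤
        ENNReal.ofReal (θ / 4 / 2) * μ K := by
    intro j hj
    refine (small_mass τ hτ hk0 j μ (ENNReal.ofReal c) (Sm j) (hSm j) K hKu le_rfl).trans ?_
    refine (mul_le_mul_right (hj0 j (by omega)).le _).trans (le_of_eq ?_)
    rw [← mul_assoc]
    congr 1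
    rw [← ENNReal.ofReal_natCast, ← ENNReal.ofReal_natCast, ← ENNReal.ofReal_ofNat 2,
      ← ENNReal.ofReal_mul (by positivity), ← ENNReal.ofReal_mul (by positivity),
      ← ENNReal.ofReal_mul (by positivity)]
    congr 1
    rw [← hC, hc]
    field_simp
    norm_num
  have hSmm : ∀ j, MeasurableSet {x | Sm j (kaddr n k j x) (kaddr n k (j + 1) x)} := fun j =>
    ((measurable_kaddr n k j).prodMk (measurable_kaddr n k (j + 1)))
      (MeasurableSet.of_discrete (s := {q : (Fin n → ℤ) × (Fin n → ℤ) | Sm j q.1 q.2}))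
  obtain ⟨F, hFK, hFm, hF0, hFf⟩ := markov_limsup μ K hKc.measurableSet hK0 (j0 + 1)
    (fun j => {x | Sm j (kaddr n k j x) (kaddr n k (j + 1) x)}) hSmm
    (show 0 < θ / 4 by positivity) hsmall
  have hHzero := hausdorff_zero hk2 B hu hu1 (M * k ^ m) hB hd hlt F (hFK.trans hKu) (by
    intro x hx
    obtain ⟨L2, hL2⟩ := exists_nat_gt ((j0 + 1 : ℝ) / (θ / 2))
    refine ((hFf x hx).and_eventually (eventually_ge_atTop (max L L2))).mono ?_
    rintro l ⟨h1, h2⟩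
    have hxA := (hKA (hFK hx)).2
    simp only [Set.mem_iInter] at hxA
    have h3 : (gc l x : ℝ) ≤ θ / 4 * l := hxA l ((le_max_left _ _).trans h2)
    have h4 : (j0 + 1 : ℝ) ≤ θ / 2 * l := by
      rw [div_lt_iff₀ (by positivity)] at hL2
      have : (L2 : ℝ) ≤ l := by exact_mod_cast (le_max_right _ _).trans h2
      nlinarith
    have h5 : nbCount n k B l x ≤ (j0 + 1) + gc l x + ((Finset.Ico (j0 + 1) l).filter
        (fun j => x ∈ {x | Sm j (kaddr n k j x) (kaddr n k (j + 1) x)})).card := by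
      rw [nbCount]
      have hsub : (Finset.range l).filter (fun j => kaddr n k (j + 1) x ∉ B j (kaddr n k j x)) ⊆
          (Finset.range (j0 + 1) ∪ (Finset.Icc 1 l).filter (fun j => good j (kaddr n k j x))) ∪
          ((Finset.Ico (j0 + 1) l).filter
            (fun j => x ∈ {x | Sm j (kaddr n k j x) (kaddr n k (j + 1) x)})) := by
        intro j hj
        obtain ⟨hj1, hj2⟩ := Finset.mem_filter.1 hj
        rw [Finset.mem_range] at hj1
        by_cases hjj : j < j0 + 1
        · exact Finset.mem_union_left _ (Finset.mem_union_left _ (Finset.mem_range.2 hjj))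
        · by_cases hg : good j (kaddr n k j x)
          · exact Finset.mem_union_left _ (Finset.mem_union_right _
              (Finset.mem_filter.2 ⟨Finset.mem_Icc.2 ⟨by omega, by omega⟩, hg⟩))
          · exact Finset.mem_union_right _
              (Finset.mem_filter.2 ⟨Finset.mem_Ico.2 ⟨by omega, by omega⟩, hj2, hg⟩)
      refine (Finset.card_le_card hsub).trans ((Finset.card_union_le _ _).trans ?_)
      refine Nat.add_le_add_right ((Finset.card_union_le _ _).trans ?_) _
      rw [Finset.card_range]
    have h6 : (nbCount n k B l x : ℝ) ≤ ((j0 : ℝ) + 1) + gc l x + (((Finset.Ico (j0 + 1) l).filter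
        (fun j => x ∈ {x | Sm j (kaddr n k j x) (kaddr n k (j + 1) x)})).card : ℝ) := by
      exact_mod_cast h5
    refine (h6.trans (add_le_add (add_le_add h4 h3) (le_trans (le_of_eq (by congr!)) h1))).trans ?_
    linarith)
  have hdimF : dimH F ≤ (d.toNNReal : ℝ≥0∞) := by
    refine dimH_le_of_hausdorffMeasure_ne_top ?_
    rw [Real.coe_toNNReal d hd.le, hHzero]
    exact ENNReal.zero_ne_top
  have hle : measDimH μ ≤ dimH F := iInf_le_of_le F (iInf_le_of_le hFm (iInf_le_of_le hF0 le_rfl))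
  have hfin : ENNReal.ofReal s ≤ ENNReal.ofReal d := hdim.trans (hle.trans hdimF)
  rw [ENNReal.ofReal_le_ofReal_iff hd.le] at hfin
  linarith
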